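/- Let R be an atomic domain with only finitely many atoms. Then R has only finitely many prime ideals, R is Noetherian, and every nonzero prime ideal of R is maximal. -/

import Mathlib

theorem stmt_18 (R : Type*) [CommRing R] [IsDomain R]
    (hatomic : ∀ x : R, x ≠ 0 → ¬ IsUnit x →
      ∃ s : Multiset R, (∀ f ∈ s, Irreducible f) ∧ s.prod = x)
    (hfin : {J : Ideal R | ∃ f : R, Irreducible f ∧ J = Ideal.span {f}}.Finite) :
    {P : Ideal R | P.IsPrime}.Finite ∧ IsNoetherianRing R ∧
      ∀ P : Ideal R, P.IsPrime → P ≠ ⊥ → P.IsMaximal := by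
  set A : Set (Ideal R) := {J : Ideal R | ∃ f : R, Irreducible f ∧ J = Ideal.span {f}} with hA
  have key : ∀ P : Ideal R, P.IsPrime → sSup {J | J ∈ A ∧ J ≤ P} = P := by
    intro P hP
    apply le_antisymm
    · exact sSup_le fun J hJ => hJ.2
    · intro x hx
      by_cases hx0 : x = 0
      · rw [hx0]; exact Submodule.zero_mem _
      · obtain ⟨s, hs, hsx⟩ := hatomic x hx0
          (fun hu => hP.ne_top (Ideal.eq_top_of_isUnit_mem _ hx hu))
        obtain ⟨f, hfs, hfP⟩ := (hP.multiset_prod_mem_iff_exists_mem s).1 (hsx ▸ hx)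
        have h1 : Ideal.span {f} ≤ sSup {J | J ∈ A ∧ J ≤ P} :=
          le_sSup ⟨⟨f, hs f hfs, rfl⟩, (Ideal.span_singleton_le_iff_mem P).2 hfP⟩
        apply h1
        rw [Ideal.mem_span_singleton, ← hsx]
        exact Multiset.dvd_prod hfs
  have hprimes : {P : Ideal R | P.IsPrime}.Finite := by
    refine (hfin.finite_subsets.image sSup).subset ?_
    intro P hP
    exact ⟨{J | J ∈ A ∧ J ≤ P}, fun J hJ => hJ.1, key P hP⟩
  have hN : IsNoetherianRing R := by
    refine IsNoetherianRing.of_prime fun P hP => ?_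
    have hf : {J | J ∈ A ∧ J ≤ P}.Finite := hfin.subset fun J hJ => hJ.1
    rw [← key P hP, sSup_eq_iSup]
    have := Submodule.fg_biSup hf.toFinset (fun J : Ideal R => J) (by
      intro J hJ
      obtain ⟨⟨f, -, rfl⟩, -⟩ := hf.mem_toFinset.1 hJ
      exact Submodule.fg_span_singleton f)
    simp only [Set.Finite.mem_toFinset] at this
    exact this
  refine ⟨hprimes, hN, fun P hP hP0 => ?_⟩
  obtain ⟨M, hM, hPM⟩ := Ideal.exists_le_maximal P hP.ne_top
  rcases hPM.eq_or_lt with rfl | hlt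
  · exact hM
  exfalso
  have hMp := hM.isPrime
  have hS : {Q : Ideal R | Q.IsPrime ∧ Q < M}.Finite := hprimes.subset fun Q hQ => hQ.1
  have hav : ¬ ((M : Set R) ⊆ ⋃ Q ∈ {Q : Ideal R | Q.IsPrime ∧ Q < M}, ((id Q : Ideal R) : Set R)) := by
    rw [Ideal.subset_union_prime_finite hS (f := id) ⊥ ⊥ (fun Q hQ _ _ => hQ.1)]
    rintro ⟨Q, hQ, hMQ⟩
    exact absurd hQ.2 (not_lt_of_ge hMQ)
  obtain ⟨x, hxM, hx⟩ := Set.not_subset.1 hav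
  have hmin : M ∈ (Ideal.span {x}).minimalPrimes := by
    refine ⟨⟨hMp, (Ideal.span_singleton_le_iff_mem M).2 hxM⟩, fun Q hQ hQM => ?_⟩
    by_contra hc
    exact hx (Set.mem_biUnion (x := Q) ⟨hQ.1, lt_of_le_not_ge hQM hc⟩
      ((Ideal.span_singleton_le_iff_mem Q).1 hQ.2))
  have h1 := Ideal.height_le_one_of_isPrincipal_of_mem_minimalPrimes (Ideal.span {x}) M hmin
  have h2 := Ideal.height_strict_mono_of_isPrime hlt
  have h3 := Ideal.height_strict_mono_of_isPrime (bot_lt_iff_ne_bot.2 hP0)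
  have h4 : P.height < 1 := h2.trans_le h1
  rw [Order.lt_one_iff] at h4
  rw [h4] at h3
  exact not_lt_zero h3
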